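/- Let f : B → A be a homomorphism of commutative rings. The following are equivalent: (1) f is pure as a morphism of B-modules; (2) for every B-module N the unit map η_N : N → (N ⊗_B A)^co, η_N(n) = n ⊗ 1, is bijective, and for every comodule (M, ρ) over the canonical coring A ⊗_B A the counit map ζ_M : M^co ⊗_B A → M, ζ_M(m ⊗ a) = m·a, is bijective. (This is the commutative Joyal–Tierney theorem: descent along f is effective if and only if f is pure.) -/

import Mathlib

open TensorProduct

universe u

noncomputable def unitMap (B A : Type u) [CommRing B] [CommRing A] [Algebra B A]
    (N : Type u) [AddCommGroup N] [Module B N] : N →ₗ[B] N ⊗[B] A :=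
  (TensorProduct.mk B N A).flip 1

/-- The action map `M ⊗_B A → M`, `m ⊗ a ↦ m · a`. -/
noncomputable def actionMap (B A : Type u) [CommRing B] [CommRing A] [Algebra B A]
    (M : Type u) [AddCommGroup M] [Module B M] [Module A M] [IsScalarTower B A M] :
    M ⊗[B] A →ₗ[B] M :=
  TensorProduct.lift (LinearMap.mk₂ B (fun m a => a • m)
    (fun m m' a => smul_add a m m')
    (fun b m a => smul_comm a b m)
    (fun m a a' => add_smul a a' m)
    (fun b m a => smul_assoc b a m))

/-- `(M, ρ)` is a comodule over the canonical coring `A ⊗_B A`. -/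
def IsCanComodule (B A : Type u) [CommRing B] [CommRing A] [Algebra B A]
    (M : Type u) [AddCommGroup M] [Module B M] [Module A M] [IsScalarTower B A M]
    (ρ : M →ₗ[B] M ⊗[B] A) : Prop :=
  (∀ (a : A) (m : M),
      ρ (a • m) = LinearMap.lTensor M (LinearMap.mulLeft B a) (ρ m)) ∧
  (∀ m : M, LinearMap.rTensor A ρ (ρ m) = LinearMap.rTensor A (unitMap B A M) (ρ m)) ∧
  (∀ m : M, actionMap B A M (ρ m) = m)

/-- The coinvariants `M^co = {m : ρ m = m ⊗ 1}` as a `B`-submodule. -/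
noncomputable def coinv (B A : Type u) [CommRing B] [CommRing A] [Algebra B A]
    (M : Type u) [AddCommGroup M] [Module B M] [Module A M] [IsScalarTower B A M]
    (ρ : M →ₗ[B] M ⊗[B] A) : Submodule B M where
  carrier := {m | ρ m = m ⊗ₜ[B] 1}
  add_mem' := by
    intro x y hx hy
    simp only [Set.mem_setOf_eq] at *
    rw [map_add, hx, hy, add_tmul]
  zero_mem' := by simp
  smul_mem' := by
    intro b m hm
    simp only [Set.mem_setOf_eq] at *
    rw [map_smul, hm, smul_tmul']

/-- The counit map `ζ_M : M^co ⊗_B A → M`, `m ⊗ a ↦ m · a`. -/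
noncomputable def counitMap (B A : Type u) [CommRing B] [CommRing A] [Algebra B A]
    (M : Type u) [AddCommGroup M] [Module B M] [Module A M] [IsScalarTower B A M]
    (ρ : M →ₗ[B] M ⊗[B] A) : (coinv B A M ρ) ⊗[B] A →ₗ[B] M :=
  actionMap B A M ∘ₗ LinearMap.rTensor A (coinv B A M ρ).subtype

/-!
The idea is due to Mesablishvili. Write `M⋆ = Hom_ℤ(M, ℚ/ℤ)`, so that `(Q ⊗ M)⋆ = Hom(Q, M⋆)` and a
linear map `σ : M⋆ → P⋆` induces `(Q ⊗ M)⋆ → (Q ⊗ P)⋆` even if it is not the dual of a map `P → M`.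
Purity splits the dual `A⋆ → B⋆` of `f`, hence splits the dual of `η_N` naturally in `N`. For a
comodule `M`, this splitting contracts the dual of the equalizer `M^co → M ⇉ M ⊗ A` of `ρ` and
`η_M`; a contraction of the dual survives tensoring, so `M^co ⊗ A → M ⊗ A ⇉ (M ⊗ A) ⊗ A` is still an
equalizer. By coassociativity and the counit law, so is `M → M ⊗ A ⇉ (M ⊗ A) ⊗ A`.
-/

section Character

open CharacterModule

variable {R M P Q : Type*} [CommRing R] [AddCommGroup M] [AddCommGroup P] [AddCommGroup Q]
  [Module R M] [Module R P] [Module R Q]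

theorem dual_sub (f g : M →ₗ[R] P) : dual (f - g) = dual f - dual g := by
  ext φ m
  exact map_sub φ _ _

theorem exact_dual_of_exact {f : M →ₗ[R] P} {g : P →ₗ[R] Q} (h : Function.Exact f g) :
    Function.Exact (dual g) (dual f) := by
  refine fun φ ↦ ⟨fun hφ ↦ ?_, ?_⟩
  · have hker : g.ker.toAddSubgroup ≤ AddMonoidHom.ker (φ : P →+ AddCircle (1 : ℚ)) := by
      intro p hp
      obtain ⟨m, rfl⟩ := (h p).1 hp
      exact congr($hφ m)
    have hinj : Function.Injective (g.ker.liftQ g le_rfl) :=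
      LinearMap.ker_eq_bot.1 (Submodule.ker_liftQ_eq_bot _ _ _ le_rfl)
    obtain ⟨ω, hω⟩ := dual_surjective_of_injective _ hinj (QuotientAddGroup.lift _ _ hker)
    exact ⟨ω, by ext p; exact congr($hω (Submodule.Quotient.mk p))⟩
  · rintro ⟨ω, rfl⟩
    rw [← LinearMap.comp_apply, ← dual_comp, h.linearMap_comp_eq_zero, dual_zero,
      LinearMap.zero_apply]

theorem mem_of_forall_character_eq_zero {S : Submodule R M} {m : M}
    (h : ∀ φ : CharacterModule M, (∀ x ∈ S, φ x = 0) → φ m = 0) : m ∈ S := by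
  rw [← Submodule.Quotient.mk_eq_zero]
  refine eq_zero_of_character_apply fun ψ ↦ h (dual S.mkQ ψ) fun x hx ↦ ?_
  exact (congrArg ψ ((Submodule.Quotient.mk_eq_zero S).2 hx)).trans (map_zero ψ)

theorem injective_of_dual_comp_eq_id {f : M →ₗ[R] P}
    {σ : CharacterModule M →ₗ[R] CharacterModule P} (h : dual f ∘ₗ σ = .id) :
    Function.Injective f :=
  dual_surjective_iff_injective.1 fun φ ↦ ⟨σ φ, congr($h φ)⟩

theorem exact_of_dual_contraction {f : M →ₗ[R] P} {g : P →ₗ[R] Q} (hfg : g ∘ₗ f = 0)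
    {s : CharacterModule P →ₗ[R] CharacterModule Q} {t : CharacterModule M →ₗ[R] CharacterModule P}
    (h : dual g ∘ₗ s + t ∘ₗ dual f = .id) : Function.Exact f g := by
  refine LinearMap.exact_of_comp_eq_zero_of_ker_le_range hfg fun p hp ↦
    mem_of_forall_character_eq_zero fun φ hφ ↦ ?_
  have hf : dual f φ = 0 := by ext m; exact hφ _ ⟨m, rfl⟩
  calc φ p = s φ (g p) + t (dual f φ) p := congr($h φ p).symm
    _ = 0 := by rw [hf, map_zero, LinearMap.mem_ker.1 hp, map_zero, zero_add]; rfl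

section LTensor

variable {N : Type*} [AddCommGroup N] [Module R N]

/-- The map `(Q ⊗ M)⋆ → (Q ⊗ P)⋆` given by composition with `σ : M⋆ → P⋆` under the identification
`(Q ⊗ M)⋆ = Hom(Q, M⋆)`. -/
noncomputable def characterLTensor (Q : Type*) [AddCommGroup Q] [Module R Q]
    (σ : CharacterModule M →ₗ[R] CharacterModule P) :
    CharacterModule (Q ⊗[R] M) →ₗ[R] CharacterModule (Q ⊗[R] P) :=
  homEquiv.toLinearMap ∘ₗ σ.compRight R ∘ₗ homEquiv.symm.toLinearMap

theorem characterLTensor_id :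
    characterLTensor Q (.id : CharacterModule M →ₗ[R] CharacterModule M) = .id := by
  ext χ : 1
  exact homEquiv.apply_symm_apply χ

theorem characterLTensor_add (σ τ : CharacterModule M →ₗ[R] CharacterModule P) :
    characterLTensor Q (σ + τ) = characterLTensor Q σ + characterLTensor Q τ := by
  ext χ : 1
  exact homEquiv.symm.injective rfl

theorem characterLTensor_comp (τ : CharacterModule P →ₗ[R] CharacterModule N)
    (σ : CharacterModule M →ₗ[R] CharacterModule P) :
    characterLTensor Q (τ ∘ₗ σ) = characterLTensor Q τ ∘ₗ characterLTensor Q σ :=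
  rfl

theorem characterLTensor_dual (f : M →ₗ[R] P) :
    characterLTensor Q (dual f) = dual (f.lTensor Q) := by
  ext χ : 1
  exact homEquiv.symm.injective rfl

theorem characterLTensor_comp_dual_rTensor (σ : CharacterModule M →ₗ[R] CharacterModule P)
    (g : Q →ₗ[R] N) :
    characterLTensor Q σ ∘ₗ dual (g.rTensor M) = dual (g.rTensor P) ∘ₗ characterLTensor N σ := by
  ext χ : 1
  exact homEquiv.symm.injective rfl

theorem lTensor_injective_of_dual_comp_eq_id {f : M →ₗ[R] P}
    {σ : CharacterModule M →ₗ[R] CharacterModule P} (h : dual f ∘ₗ σ = .id) :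
    Function.Injective (f.lTensor Q) := by
  refine injective_of_dual_comp_eq_id (σ := characterLTensor Q σ) ?_
  rw [← characterLTensor_dual, ← characterLTensor_comp, h, characterLTensor_id]

theorem lTensor_exact_of_dual_contraction {f : M →ₗ[R] P} {g : P →ₗ[R] N} (hfg : g ∘ₗ f = 0)
    {s : CharacterModule P →ₗ[R] CharacterModule N} {t : CharacterModule M →ₗ[R] CharacterModule P}
    (h : dual g ∘ₗ s + t ∘ₗ dual f = .id) :
    Function.Exact (f.lTensor Q) (g.lTensor Q) := by
  refine exact_of_dual_contraction (s := characterLTensor Q s) (t := characterLTensor Q t) ?_ ?_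
  · rw [← LinearMap.lTensor_comp, hfg, LinearMap.lTensor_zero]
  · rw [← characterLTensor_dual, ← characterLTensor_dual, ← characterLTensor_comp,
      ← characterLTensor_comp, ← characterLTensor_add, h, characterLTensor_id]

/-- The section is adjoint to an extension along `M⋆ ⊗ M → M⋆ ⊗ P` of the evaluation character. -/
theorem exists_dual_comp_eq_id_of_lTensor_injective {f : M →ₗ[R] P}
    (h : Function.Injective (f.lTensor (CharacterModule M))) :
    ∃ σ : CharacterModule M →ₗ[R] CharacterModule P, dual f ∘ₗ σ = .id := by
  obtain ⟨χ, hχ⟩ := dual_surjective_of_injective _ h (homEquiv .id)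
  refine ⟨homEquiv.symm χ, homEquiv.injective ?_⟩
  rw [← hχ]
  exact congr($(characterLTensor_dual f) χ)

end LTensor

theorem exact_subtype_eqLocus_sub (f g : M →ₗ[R] P) :
    Function.Exact (f.eqLocus g).subtype (f - g) := by
  rw [LinearMap.eqLocus_eq_ker_sub]
  exact LinearMap.exact_subtype_ker_map _

section EqLocus

variable {f g : M →ₗ[R] P} {s : CharacterModule M →ₗ[R] CharacterModule P}

theorem exists_dual_contraction_eqLocus (hg : dual g ∘ₗ s = .id)
    (hf : dual f ∘ₗ s ∘ₗ dual f = dual f ∘ₗ s ∘ₗ dual g) :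
    ∃ t, dual (f.eqLocus g).subtype ∘ₗ t = .id ∧
      dual (f - g) ∘ₗ (-s) + t ∘ₗ dual (f.eqLocus g).subtype = .id := by
  set ι := (f.eqLocus g).subtype
  have hι : f ∘ₗ ι = g ∘ₗ ι := LinearMap.ext fun x ↦ x.2
  have hι_surj : Function.Surjective (dual ι) :=
    dual_surjective_of_injective _ (Submodule.injective_subtype _)
  have hvanish : (dual f ∘ₗ s) ∘ₗ dual (f - g) = 0 := by
    rw [dual_sub, LinearMap.comp_sub, LinearMap.comp_assoc, LinearMap.comp_assoc, hf, sub_self]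
  obtain ⟨t, ht : t ∘ₗ dual ι = dual f ∘ₗ s⟩ :=
    (LinearMap.exact_lcomp_of_exact_of_surjective _
      (exact_dual_of_exact (exact_subtype_eqLocus_sub f g)) hι_surj (dual f ∘ₗ s)).1 hvanish
  refine ⟨t, ?_, ?_⟩
  · refine (LinearMap.cancel_right hι_surj).1 ?_
    rw [LinearMap.comp_assoc, ht, ← LinearMap.comp_assoc, ← dual_comp, hι, dual_comp,
      LinearMap.comp_assoc, hg, LinearMap.comp_id, LinearMap.id_comp]
  · rw [ht, dual_sub, LinearMap.comp_neg, LinearMap.sub_comp, hg]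
    abel

theorem rTensor_subtype_eqLocus_injective (hg : dual g ∘ₗ s = .id)
    (hf : dual f ∘ₗ s ∘ₗ dual f = dual f ∘ₗ s ∘ₗ dual g) :
    Function.Injective ((f.eqLocus g).subtype.rTensor Q) := by
  obtain ⟨t, ht, -⟩ := exists_dual_contraction_eqLocus hg hf
  exact (LinearMap.lTensor_inj_iff_rTensor_inj _ _).1 (lTensor_injective_of_dual_comp_eq_id ht)

theorem rTensor_exact_subtype_eqLocus_sub (hg : dual g ∘ₗ s = .id)
    (hf : dual f ∘ₗ s ∘ₗ dual f = dual f ∘ₗ s ∘ₗ dual g) :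
    Function.Exact ((f.eqLocus g).subtype.rTensor Q) ((f - g).rTensor Q) := by
  obtain ⟨t, -, ht⟩ := exists_dual_contraction_eqLocus hg hf
  rw [LinearMap.rTensor_exact_iff_lTensor_exact]
  exact lTensor_exact_of_dual_contraction (exact_subtype_eqLocus_sub f g).linearMap_comp_eq_zero ht

end EqLocus

end Character

section Descent

open CharacterModule

variable {B A : Type u} [CommRing B] [CommRing A] [Algebra B A]

section Unit

variable {N N' : Type u} [AddCommGroup N] [Module B N] [AddCommGroup N'] [Module B N']

theorem lTensor_linearMap_eq_unitMap_comp_rid :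
    (Algebra.linearMap B A).lTensor N = unitMap B A N ∘ₗ (TensorProduct.rid B N).toLinearMap := by
  ext n
  simp [unitMap]

theorem rTensor_comp_unitMap (g : N →ₗ[B] N') :
    g.rTensor A ∘ₗ unitMap B A N = unitMap B A N' ∘ₗ g :=
  rfl

theorem range_unitMap_eq
    (h : Function.Injective (unitMap B A (N ⊗[B] A ⧸ (unitMap B A N).range))) :
    Set.range (unitMap B A N) =
      {q | (unitMap B A N).rTensor A q = unitMap B A (N ⊗[B] A) q} := by
  ext q
  refine ⟨?_, fun hq ↦ ?_⟩
  · rintro ⟨n, rfl⟩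
    exact congr($(rTensor_comp_unitMap (unitMap B A N)) n)
  · set π := (unitMap B A N).range.mkQ
    have hπ : unitMap B A _ (π q) = 0 := calc
      unitMap B A _ (π q) = π.rTensor A (unitMap B A _ q) := congr($(rTensor_comp_unitMap π) q).symm
      _ = π.rTensor A ((unitMap B A N).rTensor A q) := by rw [← hq]
      _ = 0 := by
        rw [← LinearMap.rTensor_comp_apply, LinearMap.range_mkQ_comp, LinearMap.rTensor_zero,
          LinearMap.zero_apply]
    exact (Submodule.Quotient.mk_eq_zero _).1 ((map_eq_zero_iff _ h).1 hπ)

theorem exists_dual_linearMap_comp_eq_id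
    (h : Function.Injective (unitMap B A (CharacterModule B))) :
    ∃ σ : CharacterModule B →ₗ[B] CharacterModule A,
      dual (Algebra.linearMap B A) ∘ₗ σ = .id := by
  refine exists_dual_comp_eq_id_of_lTensor_injective ?_
  rw [lTensor_linearMap_eq_unitMap_comp_rid]
  exact h.comp (TensorProduct.rid B _).injective

/-- The map `N⋆ → (N ⊗ A)⋆` induced by `σ : B⋆ → A⋆` under the identification `N⋆ = (N ⊗ B)⋆`. When
`σ` is a section of the dual of `B → A`, it is a section of the dual of `η_N`. -/
noncomputable def unitDualSection (σ : CharacterModule B →ₗ[B] CharacterModule A)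
    (N : Type u) [AddCommGroup N] [Module B N] :
    CharacterModule N →ₗ[B] CharacterModule (N ⊗[B] A) :=
  characterLTensor N σ ∘ₗ dual (TensorProduct.rid B N).toLinearMap

variable {σ : CharacterModule B →ₗ[B] CharacterModule A}

theorem dual_unitMap_comp_unitDualSection (hσ : dual (Algebra.linearMap B A) ∘ₗ σ = .id) :
    dual (unitMap B A N) ∘ₗ unitDualSection σ N = .id := by
  have hrid : Function.Injective (dual (TensorProduct.rid B N).toLinearMap) :=
    dual_injective_of_surjective _ (TensorProduct.rid B N).surjective
  refine (LinearMap.cancel_left hrid).1 ?_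
  rw [unitDualSection, ← LinearMap.comp_assoc, ← LinearMap.comp_assoc, ← dual_comp,
    ← lTensor_linearMap_eq_unitMap_comp_rid, ← characterLTensor_dual, ← characterLTensor_comp, hσ,
    characterLTensor_id, LinearMap.id_comp, LinearMap.comp_id]

theorem unitDualSection_comp_dual (σ : CharacterModule B →ₗ[B] CharacterModule A)
    (g : N →ₗ[B] N') :
    unitDualSection σ N ∘ₗ dual g = dual (g.rTensor A) ∘ₗ unitDualSection σ N' := by
  have hrid : g ∘ₗ (TensorProduct.rid B N).toLinearMap =
      (TensorProduct.rid B N').toLinearMap ∘ₗ g.rTensor B := by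
    ext n
    simp
  rw [unitDualSection, unitDualSection, LinearMap.comp_assoc, ← dual_comp, hrid, dual_comp,
    ← LinearMap.comp_assoc, characterLTensor_comp_dual_rTensor, LinearMap.comp_assoc]

end Unit

section Comodule

variable {M : Type u} [AddCommGroup M] [Module B M] [Module A M] [IsScalarTower B A M]
  {ρ : M →ₗ[B] M ⊗[B] A}

theorem coinv_eq_eqLocus : coinv B A M ρ = ρ.eqLocus (unitMap B A M) :=
  rfl

theorem comp_counitMap (hρ : IsCanComodule B A M ρ) :
    ρ ∘ₗ counitMap B A M ρ = (coinv B A M ρ).subtype.rTensor A := by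
  ext m a
  calc ρ (a • (m : M)) = (LinearMap.mulLeft B a).lTensor M (ρ m) := hρ.1 a m
    _ = (LinearMap.mulLeft B a).lTensor M ((m : M) ⊗ₜ 1) := by rw [m.2]
    _ = (m : M) ⊗ₜ a := by simp

theorem dual_comp_unitDualSection_comp_dual (hρ : IsCanComodule B A M ρ)
    (σ : CharacterModule B →ₗ[B] CharacterModule A) :
    dual ρ ∘ₗ unitDualSection σ M ∘ₗ dual ρ =
      dual ρ ∘ₗ unitDualSection σ M ∘ₗ dual (unitMap B A M) := by
  have hcoassoc : ρ.rTensor A ∘ₗ ρ = (unitMap B A M).rTensor A ∘ₗ ρ := LinearMap.ext hρ.2.1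
  rw [unitDualSection_comp_dual, unitDualSection_comp_dual, ← LinearMap.comp_assoc,
    ← LinearMap.comp_assoc, ← dual_comp, ← dual_comp, hcoassoc]

theorem counitMap_bijective (h : Function.Injective (unitMap B A (CharacterModule B)))
    (hρ : IsCanComodule B A M ρ) : Function.Bijective (counitMap B A M ρ) := by
  obtain ⟨σ, hσ⟩ := exists_dual_linearMap_comp_eq_id h
  have hη := dual_unitMap_comp_unitDualSection (N := M) hσ
  have hcontract := dual_comp_unitDualSection_comp_dual hρ σ
  constructor
  · have hinj := rTensor_subtype_eqLocus_injective (Q := A) hη hcontract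
    rw [← coinv_eq_eqLocus, ← comp_counitMap hρ] at hinj
    exact Function.Injective.of_comp (f := ρ) hinj
  · intro m
    have hm : (ρ - unitMap B A M).rTensor A (ρ m) = 0 := by
      rw [LinearMap.rTensor_sub, LinearMap.sub_apply, hρ.2.1, sub_self]
    obtain ⟨x, hx⟩ := (rTensor_exact_subtype_eqLocus_sub hη hcontract _).1 hm
    exact ⟨x, (congrArg (actionMap B A M) hx).trans (hρ.2.2 m)⟩

end Comodule

end Descent

/-- Commutative Joyal–Tierney theorem: `f : B → A` is pure as a morphism of `B`-modules
if and only if descent along `f` is effective, i.e. all unit maps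
`η_N : N → (N ⊗_B A)^co` and all counit maps `ζ_M : M^co ⊗_B A → M` are bijective. -/
theorem pure_iff_descent_effective
    (B A : Type u) [CommRing B] [CommRing A] [Algebra B A] :
    (∀ (N : Type u) [AddCommGroup N] [Module B N],
        Function.Injective (unitMap B A N)) ↔
    ((∀ (N : Type u) [AddCommGroup N] [Module B N],
        Function.Injective (unitMap B A N) ∧
        Set.range (unitMap B A N) =
          {q : N ⊗[B] A |
            LinearMap.rTensor A (unitMap B A N) q = unitMap B A (N ⊗[B] A) q}) ∧
     (∀ (M : Type u) [AddCommGroup M] [Module B M] [Module A M] [IsScalarTower B A M]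
        (ρ : M →ₗ[B] M ⊗[B] A), IsCanComodule B A M ρ →
        Function.Bijective (counitMap B A M ρ))) := by
  constructor
  · intro h
    exact ⟨fun N _ _ ↦ ⟨h N, range_unitMap_eq (h _)⟩, fun M _ _ _ _ ρ hρ ↦
      counitMap_bijective (h _) hρ⟩
  · rintro ⟨hunit, -⟩ N _ _
    exact (hunit N).1
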